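/- arXiv:1109.3026 — 2 statements merged into one kernel-verified Lean document; each statement's English description precedes it below -/
import Mathlib

section
/- Suppose μ is a nonnegative Borel measure on ℂ with μ(Γ) = 0 satisfying lim_{l→∞} ∫_{Ω_l} v_l/|z−γ_l|² dμ(z) = 0 and sup_l ∫_{Ω_l} v_l/|z−γ_l|² dμ(z) < ∞. Let (a^{(n)}) be a sequence in ℓ²_v with sup_n ‖a^{(n)}‖_v < ∞ and such that a^{(n)}_l → 0 as n → ∞ for each fixed l. Then lim_{n→∞} ∑_{l=1}^∞ |a^{(n)}_l|² v_l² ∫_{Ω_l} |z−γ_l|^{-2} dμ(z) = 0. -/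
open MeasureTheory Filter Topology
open scoped ENNReal NNReal

noncomputable section

/-! Sequences are indexed by `ℕ`, with the Lean index `n : ℕ` corresponding to the
paper's index `n + 1` (so `γ 0` is the paper's `γ_1`, `Omega γ 0` is the paper's `Ω_1`,
the paper's partial sum `∑_{m=1}^{n} v_m` is `∑ m ∈ Finset.range (n+1), v m`, and the
paper's tail `∑_{m=n+1}^∞ c_m` is `∑' m : ℕ, c (n+1+m)`). -/

/-- The annular shells `Ω_n` (here `Omega γ 0` is the paper's `Ω_1`). -/
def Omega (γ : ℕ → ℂ) : ℕ → Set ℂ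
  | 0 => {z : ℂ | ‖z‖ < (‖γ 0‖ + ‖γ 1‖) / 2}
  | n + 1 => {z : ℂ | (‖γ n‖ + ‖γ (n + 1)‖) / 2 ≤ ‖z‖ ∧ ‖z‖ < (‖γ (n + 1)‖ + ‖γ (n + 2)‖) / 2}

/-- The sparseness condition `inf_n |γ_{n+1}|/|γ_n| > 1`. -/
def Sparse (γ : ℕ → ℂ) : Prop := ∃ c : ℝ, 1 < c ∧ ∀ n, c * ‖γ n‖ ≤ ‖γ (n + 1)‖

/-- The admissibility condition `∑_n v_n/(1+|γ_n|²) < ∞`. -/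
def Admissible (γ : ℕ → ℂ) (v : ℕ → ℝ) : Prop :=
  Summable fun n => v n / (1 + ‖γ n‖ ^ 2)

/-- Membership in `ℓ²_v`. -/
def MemL2v (v : ℕ → ℝ) (a : ℕ → ℂ) : Prop := Summable fun n => ‖a n‖ ^ 2 * v n

/-- The squared norm `‖a‖²_v = ∑_n |a_n|² v_n`. -/
def normSqV (v : ℕ → ℝ) (a : ℕ → ℂ) : ℝ := ∑' n, ‖a n‖ ^ 2 * v n

/-- The set `(Γ,v)* = {z : ∑_n v_n/|z-γ_n|² < ∞}`. -/
def GammaStar (γ : ℕ → ℂ) (v : ℕ → ℝ) : Set ℂ :=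
  {z : ℂ | Summable fun n => v n / ‖z - γ n‖ ^ 2}

/-- The function of `𝓗(Γ,v)` with coefficient sequence `a`:
`f(z) = ∑_n a_n v_n/(z-γ_n)`. -/
def Hfun (γ : ℕ → ℂ) (v : ℕ → ℝ) (a : ℕ → ℂ) (z : ℂ) : ℂ :=
  ∑' n, a n * (v n : ℂ) / (z - γ n)

/-- `μ` is a Carleson measure for `𝓗(Γ,v)`:
`∫_ℂ |f|² dμ ≤ C ‖a‖²_v` for every `f ∈ 𝓗(Γ,v)` with coefficients `a ∈ ℓ²_v`. -/
def IsCarleson (γ : ℕ → ℂ) (v : ℕ → ℝ) (μ : Measure ℂ) : Prop :=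
  ∃ C : ℝ, 0 < C ∧ ∀ a : ℕ → ℂ, MemL2v v a →
    ∫⁻ z, (‖Hfun γ v a z‖₊ : ℝ≥0∞) ^ 2 ∂μ ≤ ENNReal.ofReal (C * normSqV v a)

/-- The sequence `(a k)` of coefficient sequences converges weakly to zero in `ℓ²_v`:
it is norm bounded and `∑_n a^{(k)}_n v_n conj(b_n) → 0` for every `b ∈ ℓ²_v`. -/
def WeaklyNull (v : ℕ → ℝ) (a : ℕ → ℕ → ℂ) : Prop :=
  (∃ M : ℝ, ∀ k, normSqV v (a k) ≤ M) ∧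
    ∀ b : ℕ → ℂ, MemL2v v b →
      Tendsto (fun k => ∑' n, a k n * (v n : ℂ) * (starRingEnd ℂ) (b n)) atTop (𝓝 0)

/-- `μ` is a compact (vanishing) Carleson measure for `𝓗(Γ,v)`: it is Carleson and
`∫_ℂ |f_k|² dμ → 0` for every weakly null sequence in `𝓗(Γ,v)`. -/
def IsCompactCarleson (γ : ℕ → ℂ) (v : ℕ → ℝ) (μ : Measure ℂ) : Prop :=
  IsCarleson γ v μ ∧
    ∀ a : ℕ → ℕ → ℂ, (∀ k, MemL2v v (a k)) → WeaklyNull v a →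
      Tendsto (fun k => ∫⁻ z, (‖Hfun γ v (a k) z‖₊ : ℝ≥0∞) ^ 2 ∂μ) atTop (𝓝 0)

/-- The local quantity `∫_{Ω_n} v_n/|z-γ_n|² dμ(z)`. -/
def localTerm (γ : ℕ → ℂ) (v : ℕ → ℝ) (μ : Measure ℂ) (n : ℕ) : ℝ≥0∞ :=
  ∫⁻ z in Omega γ n, ENNReal.ofReal (v n / ‖z - γ n‖ ^ 2) ∂μ

/-- The global quantity
`(∑_{m=1}^n v_m)·(∑_{m=n+1}^∞ ∫_{Ω_m} |z|⁻² dμ) + (∑_{m=n+1}^∞ v_m/|γ_m|²)·(∑_{m=1}^n μ(Ω_m))`. -/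
def globalTerm (γ : ℕ → ℂ) (v : ℕ → ℝ) (μ : Measure ℂ) (n : ℕ) : ℝ≥0∞ :=
  ENNReal.ofReal (∑ m ∈ Finset.range (n + 1), v m) *
      (∑' m : ℕ, ∫⁻ z in Omega γ (n + 1 + m), ENNReal.ofReal (1 / ‖z‖ ^ 2) ∂μ) +
    ENNReal.ofReal (∑' m : ℕ, v (n + 1 + m) / ‖γ (n + 1 + m)‖ ^ 2) *
      (∑ m ∈ Finset.range (n + 1), μ (Omega γ m))

/-!
The sum equals `∑ l, |a_l|² v_l * w_l`, where `w_l = ∫_{Ω_l} v_l / |z - γ_l|² dμ` is null and the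
`|a_l|² v_l` have bounded sum: this is the compactness of a diagonal operator with null symbol.
Outside a finite set `w_l ≤ δ`, so that part of the sum is at most `δ * sup_n ‖a⁽ⁿ⁾‖²_v`; the
finitely many remaining terms tend to zero coordinatewise.
-/

section WeightedSums

variable {ι κ : Type*}

lemma tsum_mul_le_sum_add_tsum_mul (b : ι → ℝ≥0∞) {w : ι → ℝ≥0∞} {s : Finset ι} {δ : ℝ≥0∞}
    (hw : ∀ l ∉ s, w l ≤ δ) :
    ∑' l, b l * w l ≤ ∑ l ∈ s, b l * w l + (∑' l, b l) * δ := by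
  rw [sum_eq_tsum_indicator, ← ENNReal.tsum_mul_right, ← ENNReal.tsum_add]
  refine ENNReal.tsum_le_tsum fun l => ?_
  by_cases hl : l ∈ s
  · rw [Set.indicator_of_mem (Finset.mem_coe.2 hl)]
    exact le_self_add
  · exact le_add_left (mul_le_mul_right (hw l hl) (b l))

lemma tendsto_tsum_mul_zero_of_tendsto_cofinite {p : Filter κ} {b : κ → ι → ℝ≥0∞}
    {w : ι → ℝ≥0∞} {C : ℝ≥0∞} (hw : Tendsto w cofinite (𝓝 0)) (hw_fin : ∀ l, w l ≠ ∞)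
    (hC : C ≠ ∞) (hb : ∀ᶠ n in p, ∑' l, b n l ≤ C) (hb_zero : ∀ l, Tendsto (b · l) p (𝓝 0)) :
    Tendsto (fun n => ∑' l, b n l * w l) p (𝓝 0) := by
  rw [ENNReal.tendsto_nhds_zero]
  intro ε hε
  have hε₂ : 0 < ε / 2 := ENNReal.half_pos hε.ne'
  obtain ⟨δ, hδ, hδC⟩ := ENNReal.exists_nnreal_pos_mul_lt hC hε₂.ne'
  have hlarge : {l | ¬w l ≤ δ}.Finite :=
    ENNReal.tendsto_nhds_zero.1 hw δ (ENNReal.coe_pos.2 hδ)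
  have hhead : Tendsto (fun n => ∑ l ∈ hlarge.toFinset, b n l * w l) p (𝓝 0) := by
    simpa only [zero_mul, Finset.sum_const_zero] using tendsto_finsetSum hlarge.toFinset
      fun l _ => ENNReal.Tendsto.mul_const (hb_zero l) (Or.inr (hw_fin l))
  filter_upwards [hb, ENNReal.tendsto_nhds_zero.1 hhead _ hε₂] with n hbn hhead_n
  have hsmall : ∀ l ∉ hlarge.toFinset, w l ≤ δ := by simp
  calc ∑' l, b n l * w l
      ≤ ∑ l ∈ hlarge.toFinset, b n l * w l + (∑' l, b n l) * δ :=
        tsum_mul_le_sum_add_tsum_mul (b n) hsmall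
    _ ≤ ε / 2 + δ * C := by
        rw [mul_comm (δ : ℝ≥0∞)]
        gcongr
    _ ≤ ε := (add_le_add_right hδC.le _).trans_eq (ENNReal.add_halves ε)

/-- The numbers `J l` stand for the integrals `∫_{Ω_l} |z - γ_l|⁻² dμ`, through which alone the
points, the shells and the measure enter. -/
theorem diagonal_term_tendsto_zero_general {E : Type*} [SeminormedAddGroup E] {p : Filter κ}
    {v : ι → ℝ} (hv : ∀ l, 0 ≤ v l) {J : ι → ℝ≥0∞}
    (hlim : Tendsto (fun l => ENNReal.ofReal (v l) * J l) cofinite (𝓝 0))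
    (hfin : ∀ l, ENNReal.ofReal (v l) * J l ≠ ∞) {a : κ → ι → E}
    (ha : ∀ n, Summable fun l => ‖a n l‖ ^ 2 * v l)
    (hbdd : ∃ M : ℝ, ∀ n, ∑' l, ‖a n l‖ ^ 2 * v l ≤ M)
    (hpt : ∀ l, Tendsto (fun n => a n l) p (𝓝 0)) :
    Tendsto (fun n => ∑' l, ENNReal.ofReal (‖a n l‖ ^ 2 * v l ^ 2) * J l) p (𝓝 0) := by
  obtain ⟨M, hM⟩ := hbdd
  have hnonneg (n l) : 0 ≤ ‖a n l‖ ^ 2 * v l := mul_nonneg (sq_nonneg _) (hv l)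
  have hfactor (n l) : ENNReal.ofReal (‖a n l‖ ^ 2 * v l ^ 2) * J l =
      ENNReal.ofReal (‖a n l‖ ^ 2 * v l) * (ENNReal.ofReal (v l) * J l) := by
    rw [← mul_assoc, ← ENNReal.ofReal_mul (hnonneg n l), mul_assoc, ← sq]
  have hmass (n) : ∑' l, ENNReal.ofReal (‖a n l‖ ^ 2 * v l) ≤ ENNReal.ofReal M := by
    rw [← ENNReal.ofReal_tsum_of_nonneg (hnonneg n) (ha n)]
    exact ENNReal.ofReal_le_ofReal (hM n)
  have hentry (l) : Tendsto (fun n => ENNReal.ofReal (‖a n l‖ ^ 2 * v l)) p (𝓝 0) := by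
    simpa using ENNReal.tendsto_ofReal (((hpt l).norm.pow 2).mul_const (v l))
  simp only [hfactor]
  exact tendsto_tsum_mul_zero_of_tendsto_cofinite hlim hfin ENNReal.ofReal_ne_top
    (Eventually.of_forall hmass) hentry

end WeightedSums

lemma localTerm_eq_ofReal_mul_lintegral (γ : ℕ → ℂ) {v : ℕ → ℝ} (μ : Measure ℂ) {l : ℕ}
    (hv : 0 ≤ v l) :
    localTerm γ v μ l =
      ENNReal.ofReal (v l) * ∫⁻ z in Omega γ l, ENNReal.ofReal (1 / ‖z - γ l‖ ^ 2) ∂μ := by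
  simp only [localTerm, ← lintegral_const_mul' _ _ ENNReal.ofReal_ne_top,
    ← ENNReal.ofReal_mul hv, mul_one_div]

/-- If `∫_{Ω_l} v_l/|z-γ_l|² dμ → 0` and the same quantities are uniformly bounded, then
for every norm-bounded sequence `(a^{(n)})` in `ℓ²_v` whose entries tend to zero
coordinatewise, `∑_l |a^{(n)}_l|² v_l² ∫_{Ω_l}|z-γ_l|⁻² dμ → 0`. -/
theorem diagonal_term_tendsto_zero (γ : ℕ → ℂ) (v : ℕ → ℝ)
    (hγ_inj : Function.Injective γ) (hγ_ne : ∀ n, γ n ≠ 0)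
    (hγ_mono : Monotone fun n => ‖γ n‖) (hγ_sparse : Sparse γ)
    (hv : ∀ n, 0 < v n) (hadm : Admissible γ v)
    (μ : Measure ℂ) (hμΓ : μ (Set.range γ) = 0)
    (hlim : Tendsto (fun l => localTerm γ v μ l) atTop (𝓝 0))
    (hsup : (⨆ l, localTerm γ v μ l) < ⊤)
    (a : ℕ → ℕ → ℂ) (ha : ∀ n, MemL2v v (a n))
    (hbdd : ∃ M : ℝ, ∀ n, normSqV v (a n) ≤ M)
    (hpt : ∀ l, Tendsto (fun n => a n l) atTop (𝓝 0)) :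
    Tendsto (fun n => ∑' l, ENNReal.ofReal (‖a n l‖ ^ 2 * v l ^ 2) *
        ∫⁻ z in Omega γ l, ENNReal.ofReal (1 / ‖z - γ l‖ ^ 2) ∂μ) atTop (𝓝 0) := by
  simp only [localTerm_eq_ofReal_mul_lintegral γ μ (hv _).le, ← Nat.cofinite_eq_atTop] at hlim hsup
  exact diagonal_term_tendsto_zero_general (fun l => (hv l).le) hlim
    (fun l => ((le_iSup _ l).trans_lt hsup).ne) ha hbdd hpt
end
end

section
/- Set P_n = ∑_{m=n+1}^∞ v_m/|γ_m|², and suppose lim_{n→∞} P_n · (∑_{m=1}^{n} μ(Ω_m)) = 0. Let (a^{(n)}) be a sequence in ℓ²_v with sup_n ‖a^{(n)}‖_v < ∞ and such that a^{(n)}_m → 0 as n → ∞ for each fixed m. Then lim_{n→∞} ∑_{l=1}^∞ μ(Ω_l) (∑_{m=l+1}^∞ |a^{(n)}_m| v_m/|γ_m|)² = 0. -/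
open MeasureTheory Filter Topology
open scoped ENNReal NNReal

noncomputable section

/-! With `u = √v / |γ|` and `b = |a| √v` the claim concerns `∑_l w_l (∑_{m>l} b_m u_m)²`, where
`w_l = μ(Ω_l)`. Write `W_n = ∑_{j<n} w_j` and `Q_n = ∑_{m≥n} u_m²`. If `W_n Q_n ≤ C` for every `n`,
then this sum is at most `4C ∑ b_m²` (a weighted Hardy inequality). This is Schur's test with
weights `√Q_m`: by Cauchy–Schwarz
`(∑_{m>l} b_m u_m)² ≤ (∑_{m>l} u_m² / √Q_m) (∑_{m>l} b_m² √Q_m)`, and both resulting sums telescope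
through `x / √(x + y) ≤ 2 (√(x + y) - √y)`. Truncating `u` to `m ≥ N` replaces `C` by
`sup_{n≥N} W_n Q_n`, which is small when `W_n Q_n → 0`; the remaining part involves only finitely
many coordinates of `b`, so it tends to zero. -/

section FiniteHardy

lemma div_sqrt_add_two_mul_sqrt_le (x y : ℝ≥0) :
    x / NNReal.sqrt (x + y) + 2 * NNReal.sqrt y ≤ 2 * NNReal.sqrt (x + y) := by
  rcases eq_or_ne (x + y) 0 with h | h
  · simp [(add_eq_zero.mp h).1, (add_eq_zero.mp h).2]
  have hs : 0 < NNReal.sqrt (x + y) := NNReal.sqrt_pos.2 (pos_iff_ne_zero.2 h)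
  refine le_of_mul_le_mul_right ?_ hs
  calc (x / NNReal.sqrt (x + y) + 2 * NNReal.sqrt y) * NNReal.sqrt (x + y)
      = x + 2 * NNReal.sqrt y * NNReal.sqrt (x + y) := by
        rw [add_mul, div_mul_cancel₀ _ hs.ne']
    _ ≤ x + (NNReal.sqrt y ^ 2 + NNReal.sqrt (x + y) ^ 2) := by
        gcongr; exact two_mul_le_add_sq _ _
    _ = 2 * NNReal.sqrt (x + y) * NNReal.sqrt (x + y) := by
        rw [mul_assoc, NNReal.mul_self_sqrt, NNReal.sq_sqrt, NNReal.sq_sqrt]; ring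

lemma sum_range_div_sqrt_sum_range_le (x : ℕ → ℝ≥0) (n : ℕ) :
    ∑ k ∈ Finset.range n, x k / NNReal.sqrt (∑ j ∈ Finset.range (k + 1), x j) ≤
      2 * NNReal.sqrt (∑ k ∈ Finset.range n, x k) := by
  induction n with
  | zero => simp
  | succ n ih =>
    have step := div_sqrt_add_two_mul_sqrt_le (x n) (∑ k ∈ Finset.range n, x k)
    rw [add_comm (x n) (∑ k ∈ Finset.range n, x k), ← Finset.sum_range_succ] at step
    rw [Finset.sum_range_succ, add_comm]
    exact (add_le_add_right ih _).trans step

lemma sum_Ico_div_sqrt_sum_Ico_le (x : ℕ → ℝ≥0) (n K : ℕ) :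
    ∑ k ∈ Finset.Ico n K, x k / NNReal.sqrt (∑ j ∈ Finset.Ico k K, x j) ≤
      2 * NNReal.sqrt (∑ k ∈ Finset.Ico n K, x k) := by
  rcases le_total K n with hKn | hnK
  · simp [Finset.Ico_eq_empty_of_le hKn]
  induction hnK using Nat.decreasingInduction with
  | self => simp
  | of_succ n hn ih =>
    have step := div_sqrt_add_two_mul_sqrt_le (x n) (∑ k ∈ Finset.Ico (n + 1) K, x k)
    rw [← Finset.sum_eq_sum_Ico_succ_bot hn] at step
    rw [Finset.sum_eq_sum_Ico_succ_bot hn fun k => x k / _]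
    exact (add_le_add_right ih _).trans step

lemma sq_sum_Ico_mul_le (b u : ℕ → ℝ≥0) (n K : ℕ) :
    (∑ m ∈ Finset.Ico n K, b m * u m) ^ 2 ≤
      2 * NNReal.sqrt (∑ m ∈ Finset.Ico n K, u m ^ 2) *
        ∑ m ∈ Finset.Ico n K, b m ^ 2 * NNReal.sqrt (∑ k ∈ Finset.Ico m K, u k ^ 2) := by
  have cauchy_schwarz := Finset.sum_sq_le_sum_mul_sum_of_sq_le_mul (Finset.Ico n K)
    (r := fun m => b m * u m)
    (f := fun m => u m ^ 2 / NNReal.sqrt (∑ k ∈ Finset.Ico m K, u k ^ 2))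
    (g := fun m => b m ^ 2 * NNReal.sqrt (∑ k ∈ Finset.Ico m K, u k ^ 2))
    (fun _ _ => zero_le) (fun _ _ => zero_le) fun m hm => by
      rcases eq_or_ne (u m) 0 with hu | hu
      · simp [hu]
      have hpos : 0 < ∑ k ∈ Finset.Ico m K, u k ^ 2 :=
        (pow_pos (pos_iff_ne_zero.2 hu) 2).trans_le
          (Finset.single_le_sum_of_canonicallyOrdered (f := fun k => u k ^ 2)
            (Finset.left_mem_Ico.2 (Finset.mem_Ico.1 hm).2))
      have := (NNReal.sqrt_pos.2 hpos).ne'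
      refine le_of_eq ?_
      field_simp
  exact cauchy_schwarz.trans
    (mul_le_mul_left (sum_Ico_div_sqrt_sum_Ico_le (fun k => u k ^ 2) n K) _)

variable {w Q : ℕ → ℝ≥0} {C : ℝ≥0}

lemma sum_range_mul_sqrt_succ_le (hC : ∀ n, (∑ j ∈ Finset.range n, w j) * Q n ≤ C) (m : ℕ) :
    ∑ l ∈ Finset.range m, w l * NNReal.sqrt (Q (l + 1)) ≤
      2 * NNReal.sqrt C * NNReal.sqrt (∑ j ∈ Finset.range m, w j) := by
  have term_le (l : ℕ) : w l * NNReal.sqrt (Q (l + 1)) ≤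
      NNReal.sqrt C * (w l / NNReal.sqrt (∑ j ∈ Finset.range (l + 1), w j)) := by
    rcases eq_or_ne (w l) 0 with hw | hw
    · simp [hw]
    have hpos : 0 < ∑ j ∈ Finset.range (l + 1), w j :=
      (pos_iff_ne_zero.2 hw).trans_le
        (Finset.single_le_sum_of_canonicallyOrdered (Finset.self_mem_range_succ l))
    rw [← mul_div_assoc, le_div_iff₀ (NNReal.sqrt_pos.2 hpos), mul_assoc, mul_comm,
      mul_comm (NNReal.sqrt (Q (l + 1))), ← NNReal.sqrt_mul]
    gcongr
    exact hC (l + 1)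
  calc ∑ l ∈ Finset.range m, w l * NNReal.sqrt (Q (l + 1))
      ≤ ∑ l ∈ Finset.range m,
          NNReal.sqrt C * (w l / NNReal.sqrt (∑ j ∈ Finset.range (l + 1), w j)) :=
        Finset.sum_le_sum fun l _ => term_le l
    _ ≤ NNReal.sqrt C * (2 * NNReal.sqrt (∑ j ∈ Finset.range m, w j)) := by
        rw [← Finset.mul_sum]
        gcongr
        exact sum_range_div_sqrt_sum_range_le w m
    _ = 2 * NNReal.sqrt C * NNReal.sqrt (∑ j ∈ Finset.range m, w j) := by ring

lemma sum_range_mul_sqrt_succ_mul_sqrt_le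
    (hC : ∀ n, (∑ j ∈ Finset.range n, w j) * Q n ≤ C) (m : ℕ) :
    (∑ l ∈ Finset.range m, w l * NNReal.sqrt (Q (l + 1))) * NNReal.sqrt (Q m) ≤ 2 * C := by
  calc (∑ l ∈ Finset.range m, w l * NNReal.sqrt (Q (l + 1))) * NNReal.sqrt (Q m)
      ≤ 2 * NNReal.sqrt C * NNReal.sqrt (∑ j ∈ Finset.range m, w j) * NNReal.sqrt (Q m) := by
        gcongr; exact sum_range_mul_sqrt_succ_le hC m
    _ = 2 * NNReal.sqrt C * NNReal.sqrt ((∑ j ∈ Finset.range m, w j) * Q m) := by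
        rw [NNReal.sqrt_mul, mul_assoc]
    _ ≤ 2 * NNReal.sqrt C * NNReal.sqrt C := by
        gcongr; exact hC m
    _ = 2 * C := by rw [mul_assoc, NNReal.mul_self_sqrt]

theorem sum_mul_sq_sum_Ico_le (b : ℕ → ℝ≥0) {u : ℕ → ℝ≥0} {K : ℕ}
    (hC : ∀ n, (∑ j ∈ Finset.range n, w j) * ∑ m ∈ Finset.Ico n K, u m ^ 2 ≤ C) :
    ∑ l ∈ Finset.range K, w l * (∑ m ∈ Finset.Ico (l + 1) K, b m * u m) ^ 2 ≤
      4 * C * ∑ m ∈ Finset.range K, b m ^ 2 := by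
  set Q : ℕ → ℝ≥0 := fun n => ∑ m ∈ Finset.Ico n K, u m ^ 2
  calc ∑ l ∈ Finset.range K, w l * (∑ m ∈ Finset.Ico (l + 1) K, b m * u m) ^ 2
      ≤ ∑ l ∈ Finset.range K, w l * (2 * NNReal.sqrt (Q (l + 1)) *
          ∑ m ∈ Finset.Ico (l + 1) K, b m ^ 2 * NNReal.sqrt (Q m)) := by
        gcongr with l; exact sq_sum_Ico_mul_le b u (l + 1) K
    _ = ∑ l ∈ Finset.Ico 0 K, ∑ m ∈ Finset.Ico (l + 1) K,
          2 * b m ^ 2 * (w l * NNReal.sqrt (Q (l + 1)) * NNReal.sqrt (Q m)) := by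
        simp only [Finset.mul_sum, Finset.range_eq_Ico]
        refine Finset.sum_congr rfl fun l _ => Finset.sum_congr rfl fun m _ => ?_
        ring
    _ = ∑ m ∈ Finset.range K, 2 * b m ^ 2 *
          ((∑ l ∈ Finset.range m, w l * NNReal.sqrt (Q (l + 1))) * NNReal.sqrt (Q m)) := by
        rw [Finset.sum_Ico_Ico_comm']
        simp only [Finset.mul_sum, Finset.sum_mul, Finset.range_eq_Ico]
    _ ≤ ∑ m ∈ Finset.range K, 2 * b m ^ 2 * (2 * C) := by
        gcongr ∑ m ∈ _, _ * ?_ with m; exact sum_range_mul_sqrt_succ_mul_sqrt_le (Q := Q) hC m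
    _ = 4 * C * ∑ m ∈ Finset.range K, b m ^ 2 := by
        rw [Finset.mul_sum]; exact Finset.sum_congr rfl fun m _ => by ring

end FiniteHardy

lemma tsum_Ici_eq_tsum_add {M : Type*} [AddCommMonoid M] [TopologicalSpace M] (f : ℕ → M)
    (n : ℕ) : ∑' m : Set.Ici n, f m = ∑' k, f (n + k) := by
  have range_add : Set.range (n + ·) = Set.Ici n := by
    ext m; simp [le_iff_exists_add, eq_comm]
  rw [← range_add, tsum_range f (add_right_injective n)]

lemma sum_Ico_le_tsum_Ici (f : ℕ → ℝ≥0∞) (n K : ℕ) :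
    ∑ m ∈ Finset.Ico n K, f m ≤ ∑' m : Set.Ici n, f m := by
  rw [tsum_Ici_eq_tsum_add, Finset.sum_Ico_eq_sum_range]
  exact ENNReal.sum_le_tsum _

lemma tendsto_sum_Ico_tsum_Ici (f : ℕ → ℝ≥0∞) (n : ℕ) :
    Tendsto (fun K => ∑ m ∈ Finset.Ico n K, f m) atTop (𝓝 (∑' m : Set.Ici n, f m)) := by
  simp only [tsum_Ici_eq_tsum_add, Finset.sum_Ico_eq_sum_range]
  exact (ENNReal.tendsto_nat_tsum fun k => f (n + k)).comp (tendsto_sub_atTop_nat n)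

section Hardy

variable {w u : ℕ → ℝ≥0} {C : ℝ≥0} {N : ℕ}

theorem tsum_mul_sq_tsum_Ioi_le (b : ℕ → ℝ≥0)
    (hC : ∀ n, (∑ j ∈ Finset.range n, (w j : ℝ≥0∞)) * ∑' m : Set.Ici n, (u m : ℝ≥0∞) ^ 2 ≤ C) :
    ∑' l, w l * (∑' m : Set.Ioi l, (b m * u m : ℝ≥0∞)) ^ 2 ≤
      4 * C * ∑' m, (b m : ℝ≥0∞) ^ 2 := by
  have partial_le (K : ℕ) :
      ∑ l ∈ Finset.range K, w l * (∑ m ∈ Finset.Ico (l + 1) K, (b m * u m : ℝ≥0∞)) ^ 2 ≤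
        4 * C * ∑' m, (b m : ℝ≥0∞) ^ 2 := by
    have hCK (n : ℕ) :
        (∑ j ∈ Finset.range n, w j) * ∑ m ∈ Finset.Ico n K, u m ^ 2 ≤ C := by
      have := (mul_le_mul_right (sum_Ico_le_tsum_Ici (fun m => (u m : ℝ≥0∞) ^ 2) n K) _).trans
        (hC n)
      exact_mod_cast this
    calc ∑ l ∈ Finset.range K, w l * (∑ m ∈ Finset.Ico (l + 1) K, (b m * u m : ℝ≥0∞)) ^ 2
        ≤ 4 * C * ∑ m ∈ Finset.range K, (b m : ℝ≥0∞) ^ 2 := by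
          exact_mod_cast sum_mul_sq_sum_Ico_le b hCK
      _ ≤ 4 * C * ∑' m, (b m : ℝ≥0∞) ^ 2 := by gcongr; exact ENNReal.sum_le_tsum _
  refine ENNReal.tsum_le_of_sum_range_le fun L => ?_
  have tendsto_partial : Tendsto
      (fun K => ∑ l ∈ Finset.range L,
        w l * (∑ m ∈ Finset.Ico (l + 1) K, (b m * u m : ℝ≥0∞)) ^ 2) atTop
      (𝓝 (∑ l ∈ Finset.range L, w l * (∑' m : Set.Ioi l, (b m * u m : ℝ≥0∞)) ^ 2)) := by
    refine tendsto_finsetSum _ fun l _ => ENNReal.Tendsto.const_mul (ENNReal.Tendsto.pow ?_)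
      (Or.inr ENNReal.coe_ne_top)
    rw [show Set.Ioi l = Set.Ici (l + 1) from (Order.Ici_succ l).symm]
    exact tendsto_sum_Ico_tsum_Ici (fun m => (b m * u m : ℝ≥0∞)) (l + 1)
  refine le_of_tendsto tendsto_partial ((eventually_ge_atTop L).mono fun K hLK => ?_)
  exact (Finset.sum_le_sum_of_subset (Finset.range_subset_range.2 hLK)).trans (partial_le K)

theorem tsum_mul_sq_tsum_Ioi_inter_Ici_le (b : ℕ → ℝ≥0)
    (hC : ∀ n ≥ N,
      (∑ j ∈ Finset.range n, (w j : ℝ≥0∞)) * ∑' m : Set.Ici n, (u m : ℝ≥0∞) ^ 2 ≤ C) :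
    ∑' l, w l * (∑' m : ↥(Set.Ioi l ∩ Set.Ici N), (b m * u m : ℝ≥0∞)) ^ 2 ≤
      4 * C * ∑' m, (b m : ℝ≥0∞) ^ 2 := by
  set uN : ℕ → ℝ≥0 := (Set.Ici N).indicator u
  have sq_uN (m : ℕ) : (uN m : ℝ≥0∞) ^ 2 =
      (Set.Ici N).indicator (fun m => (u m : ℝ≥0∞) ^ 2) m := by
    by_cases hm : m ∈ Set.Ici N <;> simp [uN, hm]
  have mul_uN (m : ℕ) : (b m * uN m : ℝ≥0∞) =
      (Set.Ici N).indicator (fun m => (b m * u m : ℝ≥0∞)) m := by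
    by_cases hm : m ∈ Set.Ici N <;> simp [uN, hm]
  have hCN (n : ℕ) :
      (∑ j ∈ Finset.range n, (w j : ℝ≥0∞)) * ∑' m : Set.Ici n, (uN m : ℝ≥0∞) ^ 2 ≤ C := by
    refine le_trans ?_ (hC (n ⊔ N) le_sup_right)
    gcongr ?_ * ?_
    · exact Finset.sum_le_sum_of_subset (Finset.range_subset_range.2 le_sup_left)
    · simp only [sq_uN]
      rw [tsum_subtype (Set.Ici n), Set.indicator_indicator, Set.Ici_inter_Ici, ← tsum_subtype]
  convert tsum_mul_sq_tsum_Ioi_le b hCN using 5 with l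
  simp only [mul_uN]
  rw [tsum_subtype (Set.Ioi l), Set.indicator_indicator, ← tsum_subtype]

lemma tsum_mul_sq_tsum_Ioi_inter_Iio_le (w : ℕ → ℝ≥0∞) (f : ℕ → ℝ≥0∞) (N : ℕ) :
    ∑' l, w l * (∑' m : ↥(Set.Ioi l ∩ Set.Iio N), f m) ^ 2 ≤
      (∑ l ∈ Finset.range N, w l) * (∑ m ∈ Finset.range N, f m) ^ 2 := by
  rw [tsum_eq_sum (s := Finset.range N) fun l hl => by
    have : Set.Ioi l ∩ Set.Iio N = ∅ := by
      rw [Set.Ioi_inter_Iio]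
      exact Set.Ioo_eq_empty_of_le (not_lt.1 fun h => hl (Finset.mem_range.2 h))
    simp [this]]
  rw [Finset.sum_mul]
  gcongr with l
  calc ∑' m : ↥(Set.Ioi l ∩ Set.Iio N), f m
      ≤ ∑' m : ↥(Finset.range N : Set ℕ), f m :=
        ENNReal.tsum_mono_subtype f fun m hm => by simpa using hm.2
    _ = ∑ m ∈ Finset.range N, f m := Finset.tsum_subtype' _ _

lemma ennreal_add_sq_le (x y : ℝ≥0∞) : (x + y) ^ 2 ≤ 2 * x ^ 2 + 2 * y ^ 2 := by
  have := ENNReal.rpow_add_le_mul_rpow_add_rpow x y one_le_two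
  norm_num at this
  rwa [mul_add] at this

theorem tsum_mul_sq_tsum_Ioi_le_add (b : ℕ → ℝ≥0)
    (hC : ∀ n ≥ N,
      (∑ j ∈ Finset.range n, (w j : ℝ≥0∞)) * ∑' m : Set.Ici n, (u m : ℝ≥0∞) ^ 2 ≤ C) :
    ∑' l, w l * (∑' m : Set.Ioi l, (b m * u m : ℝ≥0∞)) ^ 2 ≤
      2 * ((∑ l ∈ Finset.range N, (w l : ℝ≥0∞)) *
          (∑ m ∈ Finset.range N, (b m * u m : ℝ≥0∞)) ^ 2) +
        2 * (4 * C * ∑' m, (b m : ℝ≥0∞) ^ 2) := by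
  set f : ℕ → ℝ≥0∞ := fun m => b m * u m
  have sq_le (l : ℕ) : (∑' m : Set.Ioi l, f m) ^ 2 ≤
      2 * (∑' m : ↥(Set.Ioi l ∩ Set.Iio N), f m) ^ 2 +
        2 * (∑' m : ↥(Set.Ioi l ∩ Set.Ici N), f m) ^ 2 := by
    refine le_trans ?_ (ennreal_add_sq_le _ _)
    gcongr
    conv_lhs => rw [← Set.inter_univ (Set.Ioi l), ← Set.Iio_union_Ici (a := N),
      Set.inter_union_distrib_left]
    exact ENNReal.tsum_union_le f _ _
  calc ∑' l, w l * (∑' m : Set.Ioi l, f m) ^ 2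
      ≤ ∑' l, (2 * (w l * (∑' m : ↥(Set.Ioi l ∩ Set.Iio N), f m) ^ 2) +
          2 * (w l * (∑' m : ↥(Set.Ioi l ∩ Set.Ici N), f m) ^ 2)) := by
        refine ENNReal.tsum_le_tsum fun l => (mul_le_mul_right (sq_le l) _).trans_eq ?_
        ring
    _ = 2 * ∑' l, w l * (∑' m : ↥(Set.Ioi l ∩ Set.Iio N), f m) ^ 2 +
          2 * ∑' l, w l * (∑' m : ↥(Set.Ioi l ∩ Set.Ici N), f m) ^ 2 := by
        rw [ENNReal.tsum_add, ENNReal.tsum_mul_left, ENNReal.tsum_mul_left]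
    _ ≤ _ := by
        gcongr
        · exact tsum_mul_sq_tsum_Ioi_inter_Iio_le (fun l => w l) f N
        · exact tsum_mul_sq_tsum_Ioi_inter_Ici_le b hC

theorem tendsto_tsum_mul_sq_tsum_Ioi_zero {ι : Type*} {F : Filter ι}
    (hwu : Tendsto (fun n => (∑ j ∈ Finset.range n, (w j : ℝ≥0∞)) *
      ∑' m : Set.Ici n, (u m : ℝ≥0∞) ^ 2) atTop (𝓝 0))
    {b : ι → ℕ → ℝ≥0} {M : ℝ≥0} (hM : ∀ i, ∑' m, (b i m : ℝ≥0∞) ^ 2 ≤ M)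
    (hb : ∀ m, Tendsto (fun i => b i m) F (𝓝 0)) :
    Tendsto (fun i => ∑' l, w l * (∑' m : Set.Ioi l, (b i m * u m : ℝ≥0∞)) ^ 2) F (𝓝 0) := by
  rw [ENNReal.tendsto_nhds_zero]
  intro ε hε
  have half_pos : 0 < ε / 2 := ENNReal.half_pos hε.ne'
  obtain ⟨C, C_pos, hCM⟩ : ∃ C > 0, (C : ℝ≥0) * (8 * M : ℝ≥0∞) < ε / 2 :=
    ENNReal.exists_nnreal_pos_mul_lt (by finiteness) half_pos.ne'
  obtain ⟨N, hC⟩ := eventually_atTop.1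
    (hwu.eventually (ge_mem_nhds (ENNReal.coe_pos.2 C_pos)))
  have head_tendsto : Tendsto (fun i => 2 * ((∑ l ∈ Finset.range N, (w l : ℝ≥0∞)) *
      (∑ m ∈ Finset.range N, (b i m * u m : ℝ≥0∞)) ^ 2)) F (𝓝 0) := by
    have : Tendsto (fun i => 2 * ((∑ l ∈ Finset.range N, w l) *
        (∑ m ∈ Finset.range N, b i m * u m) ^ 2)) F (𝓝 (2 * ((∑ l ∈ Finset.range N, w l) *
          (∑ m ∈ Finset.range N, 0 * u m) ^ 2))) :=
      (((tendsto_finsetSum _ fun m _ => (hb m).mul_const (u m)).pow 2).const_mul _).const_mul _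
    simpa using ENNReal.tendsto_coe.2 this
  filter_upwards [head_tendsto.eventually (ge_mem_nhds half_pos)] with i hi
  calc ∑' l, w l * (∑' m : Set.Ioi l, (b i m * u m : ℝ≥0∞)) ^ 2
      ≤ _ := tsum_mul_sq_tsum_Ioi_le_add (b i) hC
    _ ≤ ε / 2 + C * (8 * M) := by
        refine add_le_add hi ?_
        calc 2 * (4 * C * ∑' m, (b i m : ℝ≥0∞) ^ 2) ≤ 2 * (4 * C * M) := by gcongr; exact hM i
          _ = C * (8 * M) := by ring
    _ ≤ ε / 2 + ε / 2 := by gcongr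
    _ = ε := ENNReal.add_halves ε

end Hardy

lemma ne_top_of_tendsto_mul_sum_range {Q w : ℕ → ℝ≥0∞} {c : ℝ≥0∞} (hc : c ≠ ⊤)
    (hQ : ∀ n, Q n ≠ 0)
    (h : Tendsto (fun n => Q n * ∑ m ∈ Finset.range (n + 1), w m) atTop (𝓝 c)) (l : ℕ) :
    w l ≠ ⊤ := by
  obtain ⟨n, hn, hln⟩ :=
    ((h.eventually (gt_mem_nhds hc.lt_top)).and (eventually_ge_atTop l)).exists
  have sum_lt_top := ENNReal.lt_top_of_mul_ne_top_right hn.ne (hQ n)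
  exact (ENNReal.sum_lt_top.1 sum_lt_top l (Finset.mem_range.2 (by lia))).ne

lemma ofReal_tsum_le {α : Type*} {f : α → ℝ} (hf : ∀ x, 0 ≤ f x) :
    ENNReal.ofReal (∑' x, f x) ≤ ∑' x, ENNReal.ofReal (f x) := by
  by_cases hs : Summable f
  · exact (ENNReal.ofReal_tsum_of_nonneg hf hs).le
  · simp [tsum_eq_zero_of_not_summable hs]

lemma Admissible.summable_div_norm_sq {γ : ℕ → ℂ} {v : ℕ → ℝ} (hadm : Admissible γ v)
    (hv : ∀ n, 0 ≤ v n) {c : ℝ} (hc : 0 < c) (hγ : ∀ n, c ≤ ‖γ n‖) :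
    Summable fun n => v n / ‖γ n‖ ^ 2 := by
  refine Summable.of_nonneg_of_le (fun n => div_nonneg (hv n) (sq_nonneg _)) (fun n => ?_)
    (hadm.mul_left ((1 + c ^ 2) / c ^ 2))
  have hγn : 0 < ‖γ n‖ := hc.trans_le (hγ n)
  rw [div_mul_div_comm, div_le_div_iff₀ (by positivity) (by positivity)]
  have : c ^ 2 ≤ ‖γ n‖ ^ 2 := by gcongr; exact hγ n
  nlinarith [mul_le_mul_of_nonneg_left this (hv n)]

theorem tendsto_tsum_mul_ofReal_sq_tsum_zero {ι : Type*} {F : Filter ι} {w : ℕ → ℝ≥0}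
    {u : ℕ → ℝ} (hu : ∀ n, 0 ≤ u n) (u_summable : Summable fun n => u n ^ 2)
    (hwu : Tendsto (fun n => ENNReal.ofReal (∑' k, u (n + 1 + k) ^ 2) *
      ∑ m ∈ Finset.range (n + 1), (w m : ℝ≥0∞)) atTop (𝓝 0))
    {b : ι → ℕ → ℝ} (hb : ∀ i n, 0 ≤ b i n) (b_summable : ∀ i, Summable fun n => b i n ^ 2)
    {M : ℝ} (hM : ∀ i, ∑' n, b i n ^ 2 ≤ M) (b_tendsto : ∀ m, Tendsto (fun i => b i m) F (𝓝 0)) :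
    Tendsto (fun i => ∑' l, w l *
      ENNReal.ofReal ((∑' k, b i (l + 1 + k) * u (l + 1 + k)) ^ 2)) F (𝓝 0) := by
  have ennreal_hwu : Tendsto (fun n => (∑ j ∈ Finset.range n, (w j : ℝ≥0∞)) *
      ∑' m : Set.Ici n, ((u m).toNNReal : ℝ≥0∞) ^ 2) atTop (𝓝 0) := by
    refine (tendsto_add_atTop_iff_nat 1).1 (hwu.congr fun n => ?_)
    have tail_summable : Summable fun k => u (n + 1 + k) ^ 2 :=
      u_summable.comp_injective (add_right_injective (n + 1))
    rw [mul_comm, tsum_Ici_eq_tsum_add (fun m => ((u m).toNNReal : ℝ≥0∞) ^ 2),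
      ENNReal.ofReal_tsum_of_nonneg (fun k => sq_nonneg _) tail_summable]
    simp only [ENNReal.ofReal_pow (hu _), ENNReal.ofNNReal_toNNReal]
  have ennreal_hM (i : ι) : ∑' m, ((b i m).toNNReal : ℝ≥0∞) ^ 2 ≤ M.toNNReal := by
    simp only [ENNReal.ofNNReal_toNNReal, ← ENNReal.ofReal_pow (hb i _)]
    rw [← ENNReal.ofReal_tsum_of_nonneg (fun n => by positivity) (b_summable i)]
    exact ENNReal.ofReal_le_ofReal (hM i)
  have toNNReal_tendsto (m : ℕ) : Tendsto (fun i => (b i m).toNNReal) F (𝓝 0) := by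
    simpa using tendsto_real_toNNReal (b_tendsto m)
  have ennreal_tendsto := tendsto_tsum_mul_sq_tsum_Ioi_zero (u := fun m => (u m).toNNReal)
    (b := fun i m => (b i m).toNNReal) (M := M.toNNReal) ennreal_hwu ennreal_hM toNNReal_tendsto
  refine tendsto_of_tendsto_of_tendsto_of_le_of_le tendsto_const_nhds ennreal_tendsto
    (fun _ => zero_le) fun i => ?_
  refine ENNReal.tsum_le_tsum fun l => ?_
  have hbu (n : ℕ) : 0 ≤ b i n * u n := mul_nonneg (hb i n) (hu n)
  rw [ENNReal.ofReal_pow (tsum_nonneg fun k => hbu (l + 1 + k)),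
    show Set.Ioi l = Set.Ici (l + 1) from (Order.Ici_succ l).symm,
    tsum_Ici_eq_tsum_add (fun m => ((b i m).toNNReal * (u m).toNNReal : ℝ≥0∞))]
  gcongr
  refine (ofReal_tsum_le fun k => hbu (l + 1 + k)).trans_eq ?_
  simp only [ENNReal.ofReal_mul (hb i _), ENNReal.ofNNReal_toNNReal]

theorem tail_term_tendsto_zero_general {ι E : Type*} [SeminormedAddCommGroup E] {F : Filter ι}
    {w : ℕ → ℝ≥0∞} {v r : ℕ → ℝ} (hr : ∀ n, 0 < r n) (hv : ∀ n, 0 < v n)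
    (hvr : Summable fun n => v n / r n ^ 2)
    (hP : Tendsto (fun n => ENNReal.ofReal (∑' k, v (n + 1 + k) / r (n + 1 + k) ^ 2) *
        ∑ m ∈ Finset.range (n + 1), w m) atTop (𝓝 0))
    {a : ι → ℕ → E} (ha : ∀ i, Summable fun n => ‖a i n‖ ^ 2 * v n)
    (hbdd : ∃ M : ℝ, ∀ i, ∑' n, ‖a i n‖ ^ 2 * v n ≤ M)
    (hpt : ∀ m, Tendsto (fun i => a i m) F (𝓝 0)) :
    Tendsto (fun i => ∑' l, w l *
        ENNReal.ofReal ((∑' k, ‖a i (l + 1 + k)‖ * v (l + 1 + k) / r (l + 1 + k)) ^ 2))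
      F (𝓝 0) := by
  have u_sq (n : ℕ) : (√(v n) / r n) ^ 2 = v n / r n ^ 2 := by
    rw [div_pow, Real.sq_sqrt (hv n).le]
  have b_sq (i : ι) (n : ℕ) : (‖a i n‖ * √(v n)) ^ 2 = ‖a i n‖ ^ 2 * v n := by
    rw [mul_pow, Real.sq_sqrt (hv n).le]
  have b_mul_u (i : ι) (n : ℕ) :
      ‖a i n‖ * √(v n) * (√(v n) / r n) = ‖a i n‖ * v n / r n := by
    rw [mul_div_assoc', mul_assoc, Real.mul_self_sqrt (hv n).le]
  have tail_pos (n : ℕ) : 0 < ∑' k, v (n + 1 + k) / r (n + 1 + k) ^ 2 :=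
    (hvr.comp_injective (add_right_injective (n + 1))).tsum_pos
      (fun k => (div_pos (hv _) (pow_pos (hr _) 2)).le) 0 (div_pos (hv _) (pow_pos (hr _) 2))
  lift w to ℕ → ℝ≥0 using
    ne_top_of_tendsto_mul_sum_range ENNReal.zero_ne_top
      (fun n => (ENNReal.ofReal_pos.2 (tail_pos n)).ne') hP
  obtain ⟨M, hM⟩ := hbdd
  simp only [← u_sq] at hvr hP
  simp only [← b_sq] at ha hM
  simp only [← b_mul_u]
  refine tendsto_tsum_mul_ofReal_sq_tsum_zero (u := fun n => √(v n) / r n)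
    (b := fun i n => ‖a i n‖ * √(v n)) (fun n => div_nonneg (Real.sqrt_nonneg _) (hr n).le)
    hvr hP (fun i n => by positivity) ha hM fun m => ?_
  simpa using (hpt m).norm.mul_const √(v m)

/-- If `P_n·(∑_{m=1}^n μ(Ω_m)) → 0`, where `P_n = ∑_{m=n+1}^∞ v_m/|γ_m|²`, then for every
norm-bounded sequence `(a^{(n)})` in `ℓ²_v` whose entries tend to zero coordinatewise,
`∑_l μ(Ω_l)(∑_{m=l+1}^∞ |a^{(n)}_m| v_m/|γ_m|)² → 0`. -/
theorem tail_term_tendsto_zero (γ : ℕ → ℂ) (v : ℕ → ℝ)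
    (hγ_inj : Function.Injective γ) (hγ_ne : ∀ n, γ n ≠ 0)
    (hγ_mono : Monotone fun n => ‖γ n‖) (hγ_sparse : Sparse γ)
    (hv : ∀ n, 0 < v n) (hadm : Admissible γ v)
    (μ : Measure ℂ) (hμΓ : μ (Set.range γ) = 0)
    (hP : Tendsto (fun n => ENNReal.ofReal (∑' k, v (n + 1 + k) / ‖γ (n + 1 + k)‖ ^ 2) *
        ∑ m ∈ Finset.range (n + 1), μ (Omega γ m)) atTop (𝓝 0))
    (a : ℕ → ℕ → ℂ) (ha : ∀ n, MemL2v v (a n))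
    (hbdd : ∃ M : ℝ, ∀ n, normSqV v (a n) ≤ M)
    (hpt : ∀ m, Tendsto (fun n => a n m) atTop (𝓝 0)) :
    Tendsto (fun n => ∑' l, μ (Omega γ l) *
        ENNReal.ofReal ((∑' k, ‖a n (l + 1 + k)‖ * v (l + 1 + k) / ‖γ (l + 1 + k)‖) ^ 2))
      atTop (𝓝 0) :=
  tail_term_tendsto_zero_general (fun n => norm_pos_iff.2 (hγ_ne n)) hv
    (hadm.summable_div_norm_sq (fun n => (hv n).le) (norm_pos_iff.2 (hγ_ne 0))
      fun n => hγ_mono (Nat.zero_le n)) hP ha hbdd hpt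
end
end
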